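/- Let s and e be composable labelled transition systems with s mutually accepts e, and let σ ∈ (L_{s∥e}^δ)*. Then σ ∈ Utraces(s ∥ e) if and only if σ↾L_s^δ ∈ Utraces(s) and σ↾L_e^δ ∈ Utraces(e). -/

import Mathlib

/-- Labels extended with the quiescence label `δ`. -/
inductive ELabel (Lab : Type) : Type
  | lab : Lab → ELabel Lab
  | delta : ELabel Lab

namespace ELabel

/-- Membership of an extended label in `𝓛^δ = 𝓛 ∪ {δ}`. -/
def inL {Lab : Type} (Ls : Set Lab) : ELabel Lab → Prop
  | lab ℓ => ℓ ∈ Ls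
  | delta => True

end ELabel

/-- A trace lies in `(𝓛^δ)*`. -/
def TraceIn {Lab : Type} (Ls : Set Lab) (σ : List (ELabel Lab)) : Prop :=
  ∀ x ∈ σ, ELabel.inL Ls x

/-- A labelled transition system.  `T q none q'` is an internal `τ`-step,
`T q (some ℓ) q'` is a step labelled `ℓ`. -/
structure LTS (Q : Type) (Lab : Type) where
  I : Set Lab
  U : Set Lab
  T : Q → Option Lab → Q → Prop
  q0 : Q

namespace LTS

variable {Q Lab : Type}

/-- The label set `L = I ∪ U`. -/
def L (M : LTS Q Lab) : Set Lab := M.I ∪ M.U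

/-- Standing assumptions on all LTSs: countable, disjoint input/output label
sets, transitions labelled within `L`, strong convergence (no infinite
`τ`-sequences), and image-finiteness. -/
def WellFormed (M : LTS Q Lab) : Prop :=
  M.I.Countable ∧ M.U.Countable ∧ Disjoint M.I M.U ∧
  (∀ q ℓ q', M.T q (some ℓ) q' → ℓ ∈ M.L) ∧
  (¬ ∃ f : ℕ → Q, ∀ n, M.T (f n) none (f (n + 1))) ∧
  (∀ q a, {q' | M.T q a q'}.Finite)

/-- A state is quiescent if neither an output nor `τ` is enabled in it. -/
def Quiescent (M : LTS Q Lab) (q : Q) : Prop :=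
  (∀ x ∈ M.U, ∀ q', ¬ M.T q (some x) q') ∧ ∀ q', ¬ M.T q none q'

/-- A single visible step `q --x--> q'` for `x ∈ L^δ`, where the quiescence
label `δ` gives a self-loop at quiescent states. -/
def VStep (M : LTS Q Lab) (q : Q) : ELabel Lab → Q → Prop
  | .lab ℓ, q' => M.T q (some ℓ) q'
  | .delta, q' => q' = q ∧ M.Quiescent q

/-- Zero or more `τ`-steps: `q ==ε==> q'`. -/
def Eps (M : LTS Q Lab) : Q → Q → Prop :=
  Relation.ReflTransGen fun a b => M.T a none b

/-- Weak transition `q ==σ==> q'` for `σ ∈ (L^δ)*`. -/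
inductive W (M : LTS Q Lab) : Q → List (ELabel Lab) → Q → Prop
  | nil {q q' : Q} : M.Eps q q' → W M q [] q'
  | snoc {q q1 q2 q' : Q} {σ : List (ELabel Lab)} {x : ELabel Lab} :
      W M q σ q1 → M.VStep q1 x q2 → M.Eps q2 q' → W M q (σ ++ [x]) q'

/-- `X after σ`, for a set of states `X`. -/
def afterSet (M : LTS Q Lab) (X : Set Q) (σ : List (ELabel Lab)) : Set Q :=
  {q' | ∃ q ∈ X, M.W q σ q'}

/-- `M after σ`, from the initial state. -/
def after (M : LTS Q Lab) (σ : List (ELabel Lab)) : Set Q :=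
  {q' | M.W M.q0 σ q'}

/-- The predicate underlying `out(q) ⊆ U ∪ {δ}`. -/
def outLabel (M : LTS Q Lab) (q : Q) : ELabel Lab → Prop
  | .lab ℓ => ℓ ∈ M.U ∧ ∃ q', M.T q (some ℓ) q'
  | .delta => M.Quiescent q

/-- `out(q)`. -/
def outq (M : LTS Q Lab) (q : Q) : Set (ELabel Lab) :=
  {x | M.outLabel q x}

/-- `in(q) = {ℓ ∈ I | q ==ℓ==>}`. -/
def inq (M : LTS Q Lab) (q : Q) : Set Lab :=
  {ℓ | ℓ ∈ M.I ∧ ∃ q', M.W q [ELabel.lab ℓ] q'}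

/-- `out(X) = ⋃_{q ∈ X} out(q)`. -/
def outSet (M : LTS Q Lab) (X : Set Q) : Set (ELabel Lab) :=
  ⋃ q ∈ X, M.outq q

/-- `in(X) = ⋂_{q ∈ X} in(q)`. -/
def inSet (M : LTS Q Lab) (X : Set Q) : Set Lab :=
  ⋂ q ∈ X, M.inq q

/-- Input-enabledness: `M` is an IOTS. -/
def InputEnabled (M : LTS Q Lab) : Prop :=
  ∀ q, ∀ ℓ ∈ M.I, ∃ q', M.W q [ELabel.lab ℓ] q'

/-- `Utraces(M)`. -/
def Utraces (M : LTS Q Lab) : Set (List (ELabel Lab)) :=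
  {σ | TraceIn M.L σ ∧ (∃ q', M.W M.q0 σ q') ∧
    ∀ σ1 ℓ σ2, σ = σ1 ++ ELabel.lab ℓ :: σ2 → ℓ ∈ M.I →
      ∀ q, M.W M.q0 σ1 q → ∃ q', M.W q [ELabel.lab ℓ] q'}

/-- An LTS is utrace-closed when every trace over `(L^δ)*` that it can
perform is a utrace. -/
def UtraceClosed (M : LTS Q Lab) : Prop :=
  ∀ σ : List (ELabel Lab), TraceIn M.L σ → (∃ q', M.W M.q0 σ q') → σ ∈ M.Utraces

end LTS

/-- `i uioco s`. -/
def Uioco {Qi Qs Lab : Type} (i : LTS Qi Lab) (s : LTS Qs Lab) : Prop :=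
  ∀ σ ∈ s.Utraces, i.outSet (i.after σ) ⊆ s.outSet (s.after σ)

/-- Composability: disjoint output label sets. -/
def Composable {Qs Qe Lab : Type} (s : LTS Qs Lab) (e : LTS Qe Lab) : Prop :=
  s.U ∩ e.U = ∅

/-- Parallel composition `s ∥ e`. -/
def par {Qs Qe Lab : Type} (s : LTS Qs Lab) (e : LTS Qe Lab) : LTS (Qs × Qe) Lab where
  I := (s.I \ e.U) ∪ (e.I \ s.U)
  U := s.U ∪ e.U
  T := fun p a p' =>
    match a with
    | none =>
        (s.T p.1 none p'.1 ∧ p'.2 = p.2) ∨ (e.T p.2 none p'.2 ∧ p'.1 = p.1)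
    | some ℓ =>
        (ℓ ∈ s.L ∧ ℓ ∉ e.L ∧ s.T p.1 (some ℓ) p'.1 ∧ p'.2 = p.2) ∨
        (ℓ ∈ e.L ∧ ℓ ∉ s.L ∧ e.T p.2 (some ℓ) p'.2 ∧ p'.1 = p.1) ∨
        (ℓ ∈ s.L ∧ ℓ ∈ e.L ∧ s.T p.1 (some ℓ) p'.1 ∧ e.T p.2 (some ℓ) p'.2)
  q0 := (s.q0, e.q0)

/-- `s accepts e`: along utraces of `s ∥ e`, every output of `e` that is an
input of `s` is (weakly) enabled in `s`. -/
def Accepts {Qs Qe Lab : Type} (s : LTS Qs Lab) (e : LTS Qe Lab) : Prop :=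
  ∀ σ ∈ (par s e).Utraces, ∀ qs qe, (par s e).W (par s e).q0 σ (qs, qe) →
    ∀ ℓ, ELabel.lab ℓ ∈ e.outq qe → ℓ ∈ s.I → ℓ ∈ s.inq qs

/-- `s mutually accepts e`. -/
def MutuallyAccepts {Qs Qe Lab : Type} (s : LTS Qs Lab) (e : LTS Qe Lab) : Prop :=
  Accepts s e ∧ Accepts e s

/-- `R` is an ecosim for `s` and `e`. -/
def IsEcosim {Qs Qe Lab : Type} (s : LTS Qs Lab) (e : LTS Qe Lab)
    (R : Set (Set Qs × Set Qe)) : Prop :=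
  (s.after [], e.after []) ∈ R ∧
  ∀ Xs Xe, (Xs, Xe) ∈ R →
    (∀ ℓ, ELabel.lab ℓ ∈ e.outSet Xe → ℓ ∈ s.I →
      ℓ ∈ s.inSet Xs ∧
        (s.afterSet Xs [ELabel.lab ℓ], e.afterSet Xe [ELabel.lab ℓ]) ∈ R) ∧
    (∀ ℓ, ELabel.lab ℓ ∈ s.outSet Xs → ℓ ∈ e.I →
      ℓ ∈ e.inSet Xe ∧
        (s.afterSet Xs [ELabel.lab ℓ], e.afterSet Xe [ELabel.lab ℓ]) ∈ R) ∧
    (∀ ℓ, (ELabel.lab ℓ ∈ e.outSet Xe ∨ ℓ ∈ e.inSet Xe) → ℓ ∉ s.L →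
      (Xs, e.afterSet Xe [ELabel.lab ℓ]) ∈ R) ∧
    (∀ ℓ, (ELabel.lab ℓ ∈ s.outSet Xs ∨ ℓ ∈ s.inSet Xs) → ℓ ∉ e.L →
      (s.afterSet Xs [ELabel.lab ℓ], Xe) ∈ R) ∧
    (∀ ℓ, ℓ ∈ s.inSet Xs → ℓ ∈ e.inSet Xe →
      (s.afterSet Xs [ELabel.lab ℓ], e.afterSet Xe [ELabel.lab ℓ]) ∈ R) ∧
    (ELabel.delta ∈ s.outSet Xs → ELabel.delta ∈ e.outSet Xe →
      (s.afterSet Xs [ELabel.delta], e.afterSet Xe [ELabel.delta]) ∈ R)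

/-- `s eco e`: there exists an ecosim for `s` and `e`. -/
def Eco {Qs Qe Lab : Type} (s : LTS Qs Lab) (e : LTS Qe Lab) : Prop :=
  ∃ R, IsEcosim s e R

/-- `R_U(s,e)`: the smallest relation closed under the given rules. -/
inductive RU {Qs Qe Lab : Type} (s : LTS Qs Lab) (e : LTS Qe Lab) :
    Set Qs → Set Qe → Prop
  | base : RU s e (s.after []) (e.after [])
  | syncOutE {Xs : Set Qs} {Xe : Set Qe} (ℓ : Lab) :
      RU s e Xs Xe → ELabel.lab ℓ ∈ e.outSet Xe → ℓ ∈ s.I →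
      RU s e (s.afterSet Xs [ELabel.lab ℓ]) (e.afterSet Xe [ELabel.lab ℓ])
  | syncOutS {Xs : Set Qs} {Xe : Set Qe} (ℓ : Lab) :
      RU s e Xs Xe → ELabel.lab ℓ ∈ s.outSet Xs → ℓ ∈ e.I →
      RU s e (s.afterSet Xs [ELabel.lab ℓ]) (e.afterSet Xe [ELabel.lab ℓ])
  | internalE {Xs : Set Qs} {Xe : Set Qe} (ℓ : Lab) :
      RU s e Xs Xe → (ELabel.lab ℓ ∈ e.outSet Xe ∨ ℓ ∈ e.inSet Xe) → ℓ ∉ s.L →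
      RU s e Xs (e.afterSet Xe [ELabel.lab ℓ])
  | internalS {Xs : Set Qs} {Xe : Set Qe} (ℓ : Lab) :
      RU s e Xs Xe → (ELabel.lab ℓ ∈ s.outSet Xs ∨ ℓ ∈ s.inSet Xs) → ℓ ∉ e.L →
      RU s e (s.afterSet Xs [ELabel.lab ℓ]) Xe
  | syncIn {Xs : Set Qs} {Xe : Set Qe} (ℓ : Lab) :
      RU s e Xs Xe → ℓ ∈ s.inSet Xs → ℓ ∈ e.inSet Xe →
      RU s e (s.afterSet Xs [ELabel.lab ℓ]) (e.afterSet Xe [ELabel.lab ℓ])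
  | qdelta {Xs : Set Qs} {Xe : Set Qe} :
      RU s e Xs Xe → ELabel.delta ∈ s.outSet Xs → ELabel.delta ∈ e.outSet Xe →
      RU s e (s.afterSet Xs [ELabel.delta]) (e.afterSet Xe [ELabel.delta])

open Classical in
/-- Projection `σ↾𝓛^δ` of a trace onto an (extended) label set: keeps `δ`
and the labels in `Ls`, removes all other labels. -/
noncomputable def projD {Lab : Type} (σ : List (ELabel Lab)) (Ls : Set Lab) :
    List (ELabel Lab) :=
  σ.filter fun x => decide (ELabel.inL Ls x)

open Classical in
/-- Projection `σ↾𝓛` of a trace of plain labels onto a label set. -/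
noncomputable def projL {Lab : Type} (σ : List Lab) (Ls : Set Lab) : List Lab :=
  σ.filter fun ℓ => decide (ℓ ∈ Ls)

open Classical in
/-- Substitution `σ[θ/δ]` of the label `θ` by the quiescence label `δ`. -/
noncomputable def substTheta {Lab : Type} (θ : Lab) (σ : List Lab) :
    List (ELabel Lab) :=
  σ.map fun ℓ => if ℓ = θ then ELabel.delta else ELabel.lab ℓ

/-- `⟨X⟩`: componentwise collection of a set of pairs of states. -/
def collect {Qs Qe : Type} (X : Set (Qs × Qe)) : Set Qs × Set Qe :=
  (Prod.fst '' X, Prod.snd '' X)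

/-- `q_s accepts q_e over σ`. -/
def AcceptsOver {Qs Qe Lab : Type} (s : LTS Qs Lab) (e : LTS Qe Lab)
    (qs : Qs) (qe : Qe) (σ : List (ELabel Lab)) : Prop :=
  ∀ σ1 σ2 : List (ELabel Lab), σ1 ++ σ2 = σ →
    ∀ (qs' : Qs) (qe' : Qe), (par s e).W (qs, qe) σ1 (qs', qe') →
      ∀ ℓ, ELabel.lab ℓ ∈ e.outq qe' → ℓ ∈ s.I → ℓ ∈ s.inq qs' ∧ ℓ ∈ e.U

/-- `q_s mutually accepts q_e over σ`. -/
def MutuallyAcceptsOver {Qs Qe Lab : Type} (s : LTS Qs Lab) (e : LTS Qe Lab)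
    (qs : Qs) (qe : Qe) (σ : List (ELabel Lab)) : Prop :=
  AcceptsOver s e qs qe σ ∧ AcceptsOver e s qe qs σ

/-- A test case: a quasi-finite tree-shaped LTS without `τ`-transitions, with
terminal states `pass` and `fail` carrying input self-loops, a special
quiescence-observation input `θ`, at most one output transition per state,
and receptive to all inputs other than `θ`. -/
structure TestCase (Qt Lab : Type) extends LTS Qt Lab where
  passS : Qt
  failS : Qt
  theta : Lab
  theta_input : theta ∈ I
  no_tau : ∀ q q', ¬ T q none q'
  tree : ∀ q, q ≠ q0 → q ≠ passS → q ≠ failS →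
    ∃! p : Qt × Option Lab, T p.1 p.2 q
  pass_loops : ∀ ℓ ∈ I, T passS (some ℓ) passS
  pass_terminal : ∀ a q', T passS a q' → q' = passS ∧ ∃ ℓ ∈ I, a = some ℓ
  fail_loops : ∀ ℓ ∈ I, T failS (some ℓ) failS
  fail_terminal : ∀ a q', T failS a q' → q' = failS ∧ ∃ ℓ ∈ I, a = some ℓ
  one_output : ∀ q ℓ ℓ' q' q'', ℓ ∈ U → ℓ' ∈ U →
    T q (some ℓ) q' → T q (some ℓ') q'' → ℓ = ℓ' ∧ q' = q''
  receptive : ∀ q, ∀ ℓ ∈ I, ℓ ≠ theta → ∃ q', T q (some ℓ) q'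

/-- Test execution `t ⫿ i` of a test case `t` with an implementation `i`. -/
def testExec {Qt Qi Lab : Type} (t : TestCase Qt Lab) (i : LTS Qi Lab) :
    LTS (Qt × Qi) Lab where
  I := ∅
  U := i.U ∪ (t.toLTS.L \ {t.theta})
  T := fun p a p' =>
    match a with
    | none => i.T p.2 none p'.2 ∧ p'.1 = p.1
    | some ℓ =>
        (ℓ ∈ i.L ∧ ℓ ∉ t.toLTS.L ∧ i.T p.2 (some ℓ) p'.2 ∧ p'.1 = p.1) ∨
        (ℓ ∈ t.toLTS.L ∧ ℓ ∉ i.L ∧ ℓ ≠ t.theta ∧ t.T p.1 (some ℓ) p'.1 ∧ p'.2 = p.2) ∨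
        (ℓ ∈ i.L ∧ ℓ ∈ t.toLTS.L ∧ t.T p.1 (some ℓ) p'.1 ∧ i.T p.2 (some ℓ) p'.2) ∨
        (ℓ = t.theta ∧ t.T p.1 (some ℓ) p'.1 ∧ p'.2 = p.2 ∧ i.Quiescent p.2)
  q0 := (t.q0, i.q0)

/-!
Both components follow a trace `σ` of `s ∥ e` by performing the labels of `σ` they know and idling
on the others. Hence a pair of component runs over the two projections of `σ` always glues to a
run of `s ∥ e`. A run of `s ∥ e` conversely splits into component runs, the only obstacle being
`δ`: the composition may be quiescent because one side refuses an output offered by the other.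
Along utraces mutual acceptance excludes this. So the states of `s ∥ e` after a utrace `σ` are
exactly the pairs of states of `s` and `e` after its projections, and the input conditions
defining utraces can be compared label by label, by induction on `σ`.
-/

namespace LTS

variable {Q Lab : Type} {M : LTS Q Lab} {q q' q₁ : Q} {σ : List (ELabel Lab)} {x : ELabel Lab}

theorem w_nil_iff : M.W q [] q' ↔ M.Eps q q' := by
  refine ⟨fun h => ?_, W.nil⟩
  generalize hσ : ([] : List (ELabel Lab)) = σ at h
  cases h with
  | nil h => exact h
  | snoc => simp at hσ

theorem w_append_singleton_iff :
    M.W q (σ ++ [x]) q' ↔ ∃ q₁ q₂, M.W q σ q₁ ∧ M.VStep q₁ x q₂ ∧ M.Eps q₂ q' := by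
  refine ⟨fun h => ?_, fun ⟨_, _, hσ, hx, hτ⟩ => W.snoc hσ hx hτ⟩
  generalize hρ : σ ++ [x] = ρ at h
  cases h with
  | nil => simp at hρ
  | snoc hσ hx hτ =>
    obtain ⟨rfl, rfl⟩ := List.append_singleton_inj.1 hρ
    exact ⟨_, _, hσ, hx, hτ⟩

theorem w_singleton_iff :
    M.W q [x] q' ↔ ∃ q₁ q₂, M.Eps q q₁ ∧ M.VStep q₁ x q₂ ∧ M.Eps q₂ q' := by
  simpa only [List.nil_append, w_nil_iff] using w_append_singleton_iff (M := M) (σ := [])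

theorem W.trans_eps (hσ : M.W q σ q₁) (hτ : M.Eps q₁ q') : M.W q σ q' := by
  cases hσ with
  | nil hτ' => exact .nil (hτ'.trans hτ)
  | snoc hσ hx hτ' => exact .snoc hσ hx (hτ'.trans hτ)

theorem Eps.eq_of_no_tau (h : M.Eps q q') (hq : ∀ q₁, ¬ M.T q none q₁) : q' = q := by
  obtain rfl | ⟨q₁, hτ, -⟩ := h.cases_head
  · rfl
  · exact (hq q₁ hτ).elim

/-- The condition that membership of `σ ++ [x]` in `Utraces(M)` puts on `x`: if `x` is an input of
`M`, it is weakly enabled in every state of `M after σ`. -/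
def EnablesInputAfter (M : LTS Q Lab) (σ : List (ELabel Lab)) (x : ELabel Lab) : Prop :=
  ∀ ℓ ∈ M.I, x = .lab ℓ → ∀ q, M.W M.q0 σ q → ∃ q', M.W q [.lab ℓ] q'

theorem nil_mem_utraces : [] ∈ M.Utraces :=
  ⟨by simp [TraceIn], ⟨M.q0, .nil .refl⟩, by simp⟩

theorem append_singleton_mem_utraces_iff :
    σ ++ [x] ∈ M.Utraces ↔ σ ∈ M.Utraces ∧ ELabel.inL M.L x ∧
      (∃ q', M.W M.q0 (σ ++ [x]) q') ∧ M.EnablesInputAfter σ x := by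
  constructor
  · rintro ⟨htrace, hrun, hinput⟩
    have hrunσ : ∃ q', M.W M.q0 σ q' :=
      have ⟨_, h⟩ := hrun
      have ⟨q₁, _, hσ, _⟩ := w_append_singleton_iff.1 h
      ⟨q₁, hσ⟩
    refine ⟨⟨fun y hy => htrace y (by simp [hy]), hrunσ, fun σ₁ ℓ σ₂ hσ => ?_⟩,
      htrace x (by simp), hrun, fun ℓ hℓ hx => ?_⟩
    · exact hinput σ₁ ℓ (σ₂ ++ [x]) (by simp [hσ])
    · exact hinput σ ℓ [] (by simp [hx]) hℓ
  · rintro ⟨⟨htrace, -, hinput⟩, hx, hrun, hlast⟩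
    refine ⟨?_, hrun, fun σ₁ ℓ σ₂ hσ hℓ => ?_⟩
    · simp only [TraceIn, List.mem_append, List.mem_singleton]
      rintro y (hy | rfl)
      exacts [htrace y hy, hx]
    · obtain rfl | ⟨σ₃, y, rfl⟩ := List.eq_nil_or_concat σ₂
      · obtain ⟨rfl, hxℓ⟩ := List.append_singleton_inj.1 hσ
        exact hlast ℓ hℓ hxℓ
      · have hσ' : σ ++ [x] = (σ₁ ++ .lab ℓ :: σ₃) ++ [y] := by simpa using hσ
        exact hinput σ₁ ℓ σ₃ (List.append_singleton_inj.1 hσ').1 hℓ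

/-- The move made by `M` when a system it is a component of performs the label `x`: a step labelled
`x` if `x ∈ L^δ`, and no move otherwise. -/
def LocalStep (M : LTS Q Lab) (q : Q) (x : ELabel Lab) (q' : Q) : Prop :=
  (ELabel.inL M.L x ∧ M.VStep q x q') ∨ (¬ ELabel.inL M.L x ∧ q' = q)

theorem localStep_iff_vStep (hx : ELabel.inL M.L x) : M.LocalStep q x q' ↔ M.VStep q x q' := by
  simp [LocalStep, hx]

theorem LocalStep.vStep (h : M.LocalStep q x q') (hx : ELabel.inL M.L x) : M.VStep q x q' :=
  (localStep_iff_vStep hx).1 h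

theorem localStep_iff_eq (hx : ¬ ELabel.inL M.L x) : M.LocalStep q x q' ↔ q' = q := by
  simp [LocalStep, hx]

end LTS

section Projection

variable {Lab : Type} {Ls : Set Lab} {σ : List (ELabel Lab)} {x : ELabel Lab}

theorem projD_nil : projD [] Ls = [] := rfl

theorem projD_append_singleton_of_inL (hx : ELabel.inL Ls x) :
    projD (σ ++ [x]) Ls = projD σ Ls ++ [x] := by
  simp [projD, hx]

theorem projD_append_singleton_of_not_inL (hx : ¬ ELabel.inL Ls x) :
    projD (σ ++ [x]) Ls = projD σ Ls := by
  simp [projD, hx]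

end Projection

namespace LTS

variable {Q Lab : Type} {M : LTS Q Lab} {q q' : Q} {σ : List (ELabel Lab)} {x : ELabel Lab}

theorem w_projD_append_singleton_iff :
    M.W q (projD (σ ++ [x]) M.L) q' ↔
      ∃ q₁ q₂, M.W q (projD σ M.L) q₁ ∧ M.LocalStep q₁ x q₂ ∧ M.Eps q₂ q' := by
  by_cases hx : ELabel.inL M.L x
  · simp only [projD_append_singleton_of_inL hx, w_append_singleton_iff, localStep_iff_vStep hx]
  · simp only [projD_append_singleton_of_not_inL hx, localStep_iff_eq hx]
    constructor
    · exact fun hσ => ⟨q', q', hσ, rfl, .refl⟩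
    · rintro ⟨q₁, q₂, hσ, rfl, hτ⟩
      exact hσ.trans_eps hτ

theorem projD_append_singleton_mem_utraces_iff :
    projD (σ ++ [x]) M.L ∈ M.Utraces ↔ projD σ M.L ∈ M.Utraces ∧
      (∃ q', M.W M.q0 (projD (σ ++ [x]) M.L) q') ∧ M.EnablesInputAfter (projD σ M.L) x := by
  by_cases hx : ELabel.inL M.L x
  · simp only [projD_append_singleton_of_inL hx, append_singleton_mem_utraces_iff, hx, true_and]
  · rw [projD_append_singleton_of_not_inL hx]
    have hinput : M.EnablesInputAfter (projD σ M.L) x := by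
      rintro ℓ hℓ rfl
      exact (hx (Or.inl hℓ)).elim
    exact ⟨fun h => ⟨h, h.2.1, hinput⟩, And.left⟩

theorem EnablesInputAfter.exists_w_projD_singleton {ℓ : Lab}
    (h : M.EnablesInputAfter σ (.lab ℓ)) (hℓ : ℓ ∈ M.L → ℓ ∈ M.I) (hq : M.W M.q0 σ q) :
    ∃ q', M.W q (projD [.lab ℓ] M.L) q' := by
  by_cases hx : ℓ ∈ M.L
  · simpa [projD, ELabel.inL, hx] using h ℓ (hℓ hx) rfl q hq
  · exact ⟨q, by simpa [projD, ELabel.inL, hx] using W.nil .refl⟩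

end LTS

section Par

variable {Qs Qe Lab : Type} {s : LTS Qs Lab} {e : LTS Qe Lab} {p p' : Qs × Qe}
  {σ : List (ELabel Lab)} {x : ELabel Lab} {ℓ : Lab}

theorem par_L : (par s e).L = s.L ∪ e.L := by
  ext ℓ
  simp only [LTS.L, par, Set.mem_union, Set.mem_sdiff]
  tauto

theorem par_eps_iff : (par s e).Eps p p' ↔ s.Eps p.1 p'.1 ∧ e.Eps p.2 p'.2 := by
  constructor
  · intro h
    induction h with
    | refl => exact ⟨.refl, .refl⟩
    | tail _ hτ ih =>
      obtain ⟨hτ, heq⟩ | ⟨hτ, heq⟩ := hτ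
      · exact ⟨ih.1.tail hτ, heq ▸ ih.2⟩
      · exact ⟨heq ▸ ih.1, ih.2.tail hτ⟩
  · rintro ⟨hs, he⟩
    have left : (par s e).Eps (p.1, p.2) (p'.1, p.2) :=
      hs.lift (fun q => (q, p.2)) fun _ _ hτ => Or.inl ⟨hτ, rfl⟩
    have right : (par s e).Eps (p'.1, p.2) (p'.1, p'.2) :=
      he.lift (fun q => (p'.1, q)) fun _ _ hτ => Or.inr ⟨hτ, rfl⟩
    exact left.trans right

theorem par_vStep_lab_iff : (par s e).VStep p (.lab ℓ) p' ↔
    ℓ ∈ (par s e).L ∧ s.LocalStep p.1 (.lab ℓ) p'.1 ∧ e.LocalStep p.2 (.lab ℓ) p'.2 := by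
  rw [par_L]
  simp only [LTS.VStep, LTS.LocalStep, ELabel.inL, par, Set.mem_union]
  tauto

theorem par_quiescent (hs : s.Quiescent p.1) (he : e.Quiescent p.2) : (par s e).Quiescent p := by
  constructor
  · rintro ℓ hℓ p' hstep
    obtain ⟨-, hsℓ, heℓ⟩ := par_vStep_lab_iff.1 hstep
    obtain hU | hU := hℓ
    · exact hs.1 ℓ hU _ (hsℓ.vStep (Or.inr hU))
    · exact he.1 ℓ hU _ (heℓ.vStep (Or.inr hU))
  · rintro p' (⟨hτ, -⟩ | ⟨hτ, -⟩)
    exacts [hs.2 _ hτ, he.2 _ hτ]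

theorem par_vStep_of_localStep (hx : ELabel.inL (par s e).L x)
    (hs : s.LocalStep p.1 x p'.1) (he : e.LocalStep p.2 x p'.2) : (par s e).VStep p x p' := by
  cases x with
  | lab ℓ => exact par_vStep_lab_iff.2 ⟨hx, hs, he⟩
  | delta =>
    obtain ⟨heq₁, hs⟩ := hs.vStep trivial
    obtain ⟨heq₂, he⟩ := he.vStep trivial
    exact ⟨Prod.ext heq₁ heq₂, par_quiescent hs he⟩

theorem localStep_of_par_vStep
    (hδ : (par s e).Quiescent p → s.Quiescent p.1 ∧ e.Quiescent p.2)
    (h : (par s e).VStep p x p') : s.LocalStep p.1 x p'.1 ∧ e.LocalStep p.2 x p'.2 := by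
  cases x with
  | lab ℓ => exact (par_vStep_lab_iff.1 h).2
  | delta =>
    obtain ⟨rfl, hq⟩ := h
    exact ⟨Or.inl ⟨trivial, rfl, (hδ hq).1⟩, Or.inl ⟨trivial, rfl, (hδ hq).2⟩⟩

theorem par_w_of_w_projD (hσ : TraceIn (par s e).L σ) (hs : s.W p.1 (projD σ s.L) p'.1)
    (he : e.W p.2 (projD σ e.L) p'.2) : (par s e).W p σ p' := by
  induction σ using List.reverseRecOn generalizing p' with
  | nil =>
    rw [projD_nil, LTS.w_nil_iff] at hs he
    exact .nil (par_eps_iff.2 ⟨hs, he⟩)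
  | append_singleton σ x ih =>
    obtain ⟨a₁, a₂, hs, hsx, hsτ⟩ := LTS.w_projD_append_singleton_iff.1 hs
    obtain ⟨b₁, b₂, he, hex, heτ⟩ := LTS.w_projD_append_singleton_iff.1 he
    have hrun : (par s e).W p σ (a₁, b₁) := ih (fun y hy => hσ y (by simp [hy])) hs he
    have hstep : (par s e).VStep (a₁, b₁) x (a₂, b₂) :=
      par_vStep_of_localStep (hσ x (by simp)) hsx hex
    exact .snoc hrun hstep (par_eps_iff.2 ⟨hsτ, heτ⟩)

theorem w_singleton_fst_of_par (hℓ : ℓ ∈ s.L) (h : (par s e).W p [.lab ℓ] p') :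
    s.W p.1 [.lab ℓ] p'.1 := by
  obtain ⟨p₁, p₂, hτ₁, hstep, hτ₂⟩ := LTS.w_singleton_iff.1 h
  have hsstep := (par_vStep_lab_iff.1 hstep).2.1.vStep hℓ
  exact LTS.w_singleton_iff.2
    ⟨p₁.1, p₂.1, (par_eps_iff.1 hτ₁).1, hsstep, (par_eps_iff.1 hτ₂).1⟩

theorem par_T_swap {a : Option Lab} :
    (par e s).T p.swap a p'.swap ↔ (par s e).T p a p' := by
  cases a <;> simp only [par, Prod.fst_swap, Prod.snd_swap] <;> tauto

theorem par_quiescent_swap (h : (par s e).Quiescent p) : (par e s).Quiescent p.swap :=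
  ⟨fun ℓ hℓ p' hT => h.1 ℓ (Or.symm hℓ) p'.swap (par_T_swap.1 hT),
    fun p' hτ => h.2 p'.swap (par_T_swap.1 hτ)⟩

theorem par_vStep_swap (h : (par s e).VStep p x p') : (par e s).VStep p.swap x p'.swap := by
  cases x with
  | lab ℓ => exact par_T_swap.2 h
  | delta => exact ⟨congrArg Prod.swap h.1, par_quiescent_swap h.2⟩

theorem par_eps_swap (h : (par s e).Eps p p') : (par e s).Eps p.swap p'.swap :=
  par_eps_iff.2 (par_eps_iff.1 h).symm

theorem par_w_swap (h : (par s e).W p σ p') : (par e s).W p.swap σ p'.swap := by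
  induction h with
  | nil hτ => exact .nil (par_eps_swap hτ)
  | snoc _ hx hτ ih => exact .snoc ih (par_vStep_swap hx) (par_eps_swap hτ)

theorem par_utraces_swap (h : σ ∈ (par s e).Utraces) : σ ∈ (par e s).Utraces := by
  obtain ⟨htrace, ⟨p, hrun⟩, hinput⟩ := h
  refine ⟨?_, ⟨p.swap, par_w_swap hrun⟩, fun σ₁ ℓ σ₂ hσ hℓ p hp => ?_⟩
  · rwa [par_L, Set.union_comm, ← par_L]
  · obtain ⟨p', hp'⟩ := hinput σ₁ ℓ σ₂ hσ (Or.symm hℓ) p.swap (par_w_swap hp)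
    exact ⟨p'.swap, par_w_swap hp'⟩

theorem Composable.symm (h : Composable s e) : Composable e s :=
  (Set.inter_comm _ _).trans h

theorem MutuallyAccepts.symm (h : MutuallyAccepts s e) : MutuallyAccepts e s :=
  And.symm h

theorem quiescent_fst_of_par (hcomp : Composable s e) (hacc : Accepts e s)
    (hσ : σ ∈ (par s e).Utraces) (hp : (par s e).W (par s e).q0 σ p)
    (hq : (par s e).Quiescent p) : s.Quiescent p.1 := by
  refine ⟨fun ℓ hU a hT => ?_, fun a hτ => hq.2 (a, p.2) (Or.inl ⟨hτ, rfl⟩)⟩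
  have hℓs : ℓ ∈ s.L := Or.inr hU
  have hℓe : ℓ ∉ e.U := Set.disjoint_left.1 (Set.disjoint_iff_inter_eq_empty.2 hcomp) hU
  by_cases hL : ℓ ∈ e.L
  · obtain ⟨-, b, hb⟩ := hacc σ (par_utraces_swap hσ) p.2 p.1 (par_w_swap hp) ℓ ⟨hU, a, hT⟩
      (hL.resolve_right hℓe)
    obtain ⟨b₁, b₂, hτ, hstep, -⟩ := LTS.w_singleton_iff.1 hb
    obtain rfl : b₁ = p.2 := hτ.eq_of_no_tau fun c hc => hq.2 (p.1, c) (Or.inr ⟨hc, rfl⟩)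
    exact hq.1 ℓ (Or.inl hU) (a, b₂) (Or.inr (Or.inr ⟨hℓs, hL, hT, hstep⟩))
  · exact hq.1 ℓ (Or.inl hU) (a, p.2) (Or.inl ⟨hℓs, hL, hT, rfl⟩)

theorem quiescent_of_par (hcomp : Composable s e) (hma : MutuallyAccepts s e)
    (hσ : σ ∈ (par s e).Utraces) (hp : (par s e).W (par s e).q0 σ p)
    (hq : (par s e).Quiescent p) : s.Quiescent p.1 ∧ e.Quiescent p.2 :=
  ⟨quiescent_fst_of_par hcomp hma.2 hσ hp hq,
    quiescent_fst_of_par hcomp.symm hma.1 (par_utraces_swap hσ) (par_w_swap hp)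
      (par_quiescent_swap hq)⟩

theorem w_projD_of_par_w (hcomp : Composable s e) (hma : MutuallyAccepts s e)
    (hσ : σ ∈ (par s e).Utraces) (hp : (par s e).W (par s e).q0 σ p) :
    s.W s.q0 (projD σ s.L) p.1 ∧ e.W e.q0 (projD σ e.L) p.2 := by
  induction σ using List.reverseRecOn generalizing p with
  | nil =>
    simp only [projD_nil, LTS.w_nil_iff] at hp ⊢
    exact par_eps_iff.1 hp
  | append_singleton σ x ih =>
    have hσ' : σ ∈ (par s e).Utraces := (LTS.append_singleton_mem_utraces_iff.1 hσ).1
    obtain ⟨p₁, p₂, hp₁, hx, hτ⟩ := LTS.w_append_singleton_iff.1 hp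
    obtain ⟨hs, he⟩ := ih hσ' hp₁
    obtain ⟨hsx, hex⟩ := localStep_of_par_vStep (quiescent_of_par hcomp hma hσ' hp₁) hx
    obtain ⟨hsτ, heτ⟩ := par_eps_iff.1 hτ
    exact ⟨LTS.w_projD_append_singleton_iff.2 ⟨_, _, hs, hsx, hsτ⟩,
      LTS.w_projD_append_singleton_iff.2 ⟨_, _, he, hex, heτ⟩⟩

theorem enablesInputAfter_fst_of_par (hcomp : Composable s e) (hma : MutuallyAccepts s e)
    (hσx : σ ++ [x] ∈ (par s e).Utraces) : s.EnablesInputAfter (projD σ s.L) x := by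
  rintro ℓ hI rfl a ha
  obtain ⟨hσ, -, ⟨p', hp'⟩, hinput⟩ := LTS.append_singleton_mem_utraces_iff.1 hσx
  obtain ⟨p₁, p₂, hp₁, hstep, -⟩ := LTS.w_append_singleton_iff.1 hp'
  have hreach : (par s e).W (par s e).q0 σ (a, p₁.2) :=
    par_w_of_w_projD hσ.1 ha (w_projD_of_par_w hcomp hma hσ hp₁).2
  by_cases hU : ℓ ∈ e.U
  · have hout : e.VStep p₁.2 (.lab ℓ) p₂.2 :=
      (par_vStep_lab_iff.1 hstep).2.2.vStep (Or.inr hU)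
    exact (hma.1 σ hσ a p₁.2 hreach ℓ ⟨hU, p₂.2, hout⟩ hI).2
  · obtain ⟨p, hp⟩ := hinput ℓ (Or.inl ⟨hI, hU⟩) rfl _ hreach
    exact ⟨p.1, w_singleton_fst_of_par (Or.inl hI) hp⟩

theorem projD_fst_mem_utraces (hcomp : Composable s e) (hma : MutuallyAccepts s e)
    (hσ : σ ∈ (par s e).Utraces) : projD σ s.L ∈ s.Utraces := by
  induction σ using List.reverseRecOn with
  | nil => exact LTS.nil_mem_utraces
  | append_singleton σ x ih =>
    obtain ⟨hσ', -, ⟨p, hp⟩, -⟩ := LTS.append_singleton_mem_utraces_iff.1 hσ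
    exact LTS.projD_append_singleton_mem_utraces_iff.2 ⟨ih hσ',
      ⟨p.1, (w_projD_of_par_w hcomp hma hσ hp).1⟩, enablesInputAfter_fst_of_par hcomp hma hσ⟩

theorem par_enablesInputAfter (hcomp : Composable s e) (hma : MutuallyAccepts s e)
    (hσ : σ ∈ (par s e).Utraces) (hs : s.EnablesInputAfter (projD σ s.L) x)
    (he : e.EnablesInputAfter (projD σ e.L) x) : (par s e).EnablesInputAfter σ x := by
  rintro ℓ hI rfl p hp
  obtain ⟨hps, hpe⟩ := w_projD_of_par_w hcomp hma hσ hp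
  have hℓ : (ℓ ∈ s.L → ℓ ∈ s.I) ∧ (ℓ ∈ e.L → ℓ ∈ e.I) := by
    simp only [par, LTS.L, Set.mem_union, Set.mem_sdiff] at hI ⊢
    tauto
  obtain ⟨a, ha⟩ := hs.exists_w_projD_singleton hℓ.1 hps
  obtain ⟨b, hb⟩ := he.exists_w_projD_singleton hℓ.2 hpe
  have htrace : TraceIn (par s e).L [.lab ℓ] :=
    List.forall_mem_singleton.2 (Or.inl hI)
  exact ⟨(a, b), par_w_of_w_projD htrace ha hb⟩

theorem par_mem_utraces_of_projD (hcomp : Composable s e) (hma : MutuallyAccepts s e)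
    (hσ : TraceIn (par s e).L σ) (hs : projD σ s.L ∈ s.Utraces)
    (he : projD σ e.L ∈ e.Utraces) : σ ∈ (par s e).Utraces := by
  induction σ using List.reverseRecOn with
  | nil => exact LTS.nil_mem_utraces
  | append_singleton σ x ih =>
    obtain ⟨hs, ⟨a, ha⟩, hsx⟩ := LTS.projD_append_singleton_mem_utraces_iff.1 hs
    obtain ⟨he, ⟨b, hb⟩, hex⟩ := LTS.projD_append_singleton_mem_utraces_iff.1 he
    have hσ' : σ ∈ (par s e).Utraces := ih (fun y hy => hσ y (by simp [hy])) hs he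
    have hrun : (par s e).W (par s e).q0 (σ ++ [x]) (a, b) := par_w_of_w_projD hσ ha hb
    exact LTS.append_singleton_mem_utraces_iff.2 ⟨hσ', hσ x (by simp), ⟨_, hrun⟩,
      par_enablesInputAfter hcomp hma hσ' hsx hex⟩

theorem project_utraces_general (hcomp : Composable s e) (hma : MutuallyAccepts s e)
    (hσ : TraceIn (par s e).L σ) :
    σ ∈ (par s e).Utraces ↔ projD σ s.L ∈ s.Utraces ∧ projD σ e.L ∈ e.Utraces :=
  ⟨fun h => ⟨projD_fst_mem_utraces hcomp hma h,
      projD_fst_mem_utraces hcomp.symm hma.symm (par_utraces_swap h)⟩,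
    fun ⟨hs, he⟩ => par_mem_utraces_of_projD hcomp hma hσ hs he⟩

end Par

/-- if `s` mutually accepts `e`, then `σ ∈ Utraces(s ∥ e)` iff
`σ↾L_s^δ ∈ Utraces(s)` and `σ↾L_e^δ ∈ Utraces(e)`. -/
theorem project_utraces {Qs Qe Lab : Type}
    (s : LTS Qs Lab) (e : LTS Qe Lab)
    (hs : s.WellFormed) (he : e.WellFormed)
    (hcomp : Composable s e) (hma : MutuallyAccepts s e)
    (σ : List (ELabel Lab)) (hσ : TraceIn (par s e).L σ) :
    σ ∈ (par s e).Utraces ↔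
      projD σ s.L ∈ s.Utraces ∧ projD σ e.L ∈ e.Utraces :=
  project_utraces_general hcomp hma hσ
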